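/- arXiv:2002.08946 — 5 statements merged into one kernel-verified Lean document; each statement's English description precedes it below -/
import Mathlib

section
/- Let σ, ν : ℝ² → ℝ be differentiable at a point x of the Euclidean plane, let x* ∈ ℝ², and assume the Euler identity ⟨x − x*, ∇ν(x)⟩ = −ν(x). Then the determinant and trace of the Fréchet derivative of h at x (as a linear endomorphism of ℝ²) are given by det(Dh(x)) = (1 + σ(x)(ν(x) − 1)) · ((1 − σ(x)) + (ν(x) − 1)·⟨x − x*, ∇σ(x)⟩) and tr(Dh(x)) = (1 + σ(x)(ν(x) − 1)) + (1 − σ(x)) + (ν(x) − 1)·⟨x − x*, ∇σ(x)⟩. -/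
/-!
The derivative of `h` at `x` is the rank-one perturbation of a scalar
`Dh(x) v = c v + ℓ(v) w`, where `w = x - x*`, `c = 1 + σ(x)(ν(x) - 1)` and
`ℓ = (ν(x) - 1) Dσ(x) + σ(x) Dν(x)`. In the plane such a map has determinant `c (c + ℓ(w))` and
trace `c + (c + ℓ(w))`, and the Euler identity `Dν(x) w = -ν(x)` turns `c + ℓ(w)` into
`(1 - σ(x)) + (ν(x) - 1) ⟨w, ∇σ(x)⟩`.
-/

open RealInnerProductSpace

/-- A rank-one perturbation `c • id + ℓ(·) w` of a scalar map of the plane has eigenvalues `c` and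
`c + ℓ(w)`. -/
lemma det_trace_smul_id_add_smulRight (c : ℝ) (l : EuclideanSpace ℝ (Fin 2) →ₗ[ℝ] ℝ)
    (w : EuclideanSpace ℝ (Fin 2))
    (T : EuclideanSpace ℝ (Fin 2) →ₗ[ℝ] EuclideanSpace ℝ (Fin 2))
    (hT : ∀ v, T v = c • v + l v • w) :
    LinearMap.det T = c * (c + l w) ∧
      LinearMap.trace ℝ (EuclideanSpace ℝ (Fin 2)) T = c + (c + l w) := by
  let b := (EuclideanSpace.basisFun (Fin 2) ℝ).toBasis
  have hw : l w = w 0 * l (b 0) + w 1 * l (b 1) := by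
    conv_lhs => rw [← b.sum_repr w]
    simp [b, Fin.sum_univ_two]
  rw [← LinearMap.det_toMatrix b, LinearMap.trace_eq_matrix_trace ℝ b, Matrix.det_fin_two,
    Matrix.trace_fin_two, hw]
  simp only [LinearMap.toMatrix_apply, hT]
  simp [b]
  constructor <;> ring

/-- Determinant and trace of the Fréchet derivative of the purging-type transformation
`h(z) = σ(z)·(x* + ν(z)·(z - x*)) + (1 - σ(z))·z` at a point `x` where the deforming
factor satisfies the Euler identity `⟨x - x*, ∇ν(x)⟩ = -ν(x)`:
`det Dh(x) = (1 + σ(x)(ν(x) - 1))·((1 - σ(x)) + (ν(x) - 1)⟨x - x*, ∇σ(x)⟩)` and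
`tr Dh(x) = (1 + σ(x)(ν(x) - 1)) + (1 - σ(x)) + (ν(x) - 1)⟨x - x*, ∇σ(x)⟩`. -/
theorem purging_transformation_det_trace (σ ν : EuclideanSpace ℝ (Fin 2) → ℝ)
    (xs x : EuclideanSpace ℝ (Fin 2))
    (hσ : DifferentiableAt ℝ σ x) (hν : DifferentiableAt ℝ ν x)
    (heuler : ⟪x - xs, gradient ν x⟫ = -ν x)
    (h : EuclideanSpace ℝ (Fin 2) → EuclideanSpace ℝ (Fin 2))
    (hh : h = fun z => σ z • (xs + ν z • (z - xs)) + (1 - σ z) • z) :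
    LinearMap.det
        ((fderiv ℝ h x : EuclideanSpace ℝ (Fin 2) →L[ℝ] EuclideanSpace ℝ (Fin 2)) :
          EuclideanSpace ℝ (Fin 2) →ₗ[ℝ] EuclideanSpace ℝ (Fin 2)) =
      (1 + σ x * (ν x - 1)) * ((1 - σ x) + (ν x - 1) * ⟪x - xs, gradient σ x⟫) ∧
    LinearMap.trace ℝ (EuclideanSpace ℝ (Fin 2))
        ((fderiv ℝ h x : EuclideanSpace ℝ (Fin 2) →L[ℝ] EuclideanSpace ℝ (Fin 2)) :
          EuclideanSpace ℝ (Fin 2) →ₗ[ℝ] EuclideanSpace ℝ (Fin 2)) =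
      (1 + σ x * (ν x - 1)) + (1 - σ x) + (ν x - 1) * ⟪x - xs, gradient σ x⟫ := by
  set w := x - xs with hw
  have hd := (hσ.hasFDerivAt.smul ((hν.hasFDerivAt.smul
    ((hasFDerivAt_id (𝕜 := ℝ) x).sub_const xs)).const_add xs)).add
    (((hasFDerivAt_const (1 : ℝ) x).sub hσ.hasFDerivAt).smul (hasFDerivAt_id (𝕜 := ℝ) x))
  replace hd := hd.congr_of_eventuallyEq (f₁ := h) (.of_forall fun z => by simp [hh])
  rw [inner_gradient_right, conj_trivial] at heuler
  rw [inner_gradient_right, conj_trivial]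
  obtain ⟨hdet, htr⟩ := det_trace_smul_id_add_smulRight (1 + σ x * (ν x - 1))
    (((ν x - 1) • fderiv ℝ σ x + σ x • fderiv ℝ ν x :
      EuclideanSpace ℝ (Fin 2) →L[ℝ] ℝ) : EuclideanSpace ℝ (Fin 2) →ₗ[ℝ] ℝ) w
    (fderiv ℝ h x : EuclideanSpace ℝ (Fin 2) →ₗ[ℝ] EuclideanSpace ℝ (Fin 2)) (by
      intro v
      rw [hd.fderiv]
      ext i
      simp [hw]
      ring)
  rw [hdet, htr]
  simp only [ContinuousLinearMap.coe_coe, ContinuousLinearMap.add_apply,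
    ContinuousLinearMap.smul_apply, smul_eq_mul, heuler]
  constructor <;> ring
end

section
/- Let σ, ν : ℝ² → ℝ be differentiable at a point x of the Euclidean plane and let x* ∈ ℝ². Assume: ⟨x − x*, ∇ν(x)⟩ = −ν(x); 0 ≤ σ(x) ≤ 1; 0 < ν(x) < 1; if σ(x) = 0 then ∇σ(x) = 0; and if σ(x) > 0 then ⟨x − x*, ∇σ(x)⟩ < 0. Then det(Dh(x)) > 0 and tr(Dh(x)) > 0; in particular the Fréchet derivative Dh(x) is a nonsingular (invertible) linear map on ℝ². -/
/-!
Since `h z = z + (σ z * (ν z - 1)) • (z - x*)`, the derivative of `h` at `x` is a rank-one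
perturbation of a homothety: with `u = x - x*`, `a = 1 + σ (ν - 1)` and
`φ = (ν - 1) dσ + σ dν`, it is `v ↦ a v + φ(v) u`. On the plane such a map has determinant
`a (a + φ u)` and trace `2 a + φ u` (lemma `det_trace_rankOne`), that is, eigenvalues `a` and
`a + φ u`. The bounds on `σ` and `ν` give `a > 0`, and the Euler identity turns the second
eigenvalue into `a + φ u = (1 - σ) + (ν - 1) dσ(u)`, which is positive in both cases
`σ = 0` (where `dσ = 0`) and `σ > 0` (where `dσ(u) < 0`).
-/

open RealInnerProductSpace

/-- Determinant and trace of a rank-one perturbation of a homothety of the plane. -/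
lemma det_trace_rankOne (L : EuclideanSpace ℝ (Fin 2) →ₗ[ℝ] EuclideanSpace ℝ (Fin 2))
    (a : ℝ) (φ : EuclideanSpace ℝ (Fin 2) →L[ℝ] ℝ) (u : EuclideanSpace ℝ (Fin 2))
    (hL : ∀ v, L v = a • v + φ v • u) :
    LinearMap.det L = a * (a + φ u) ∧
      LinearMap.trace ℝ (EuclideanSpace ℝ (Fin 2)) L = 2 * a + φ u := by
  set b := (EuclideanSpace.basisFun (Fin 2) ℝ).toBasis with hb
  have hφ : φ u = u 0 * φ (b 0) + u 1 * φ (b 1) := by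
    conv_lhs => rw [← b.sum_repr u]
    simp [Fin.sum_univ_two, hb]
  have hM : ∀ i j, LinearMap.toMatrix b b L i j = a * (b j) i + φ (b j) * u i := by
    intro i j
    rw [LinearMap.toMatrix_apply, hL]
    simp [hb]
  have e00 : (b 0) 0 = 1 := by simp [hb]
  have e01 : (b 0) 1 = 0 := by simp [hb]
  have e10 : (b 1) 0 = 0 := by simp [hb]
  have e11 : (b 1) 1 = 1 := by simp [hb]
  constructor
  · rw [← LinearMap.det_toMatrix b, Matrix.det_fin_two]
    simp only [hM, e00, e01, e10, e11, hφ]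
    ring
  · rw [LinearMap.trace_eq_matrix_trace ℝ b, Matrix.trace_fin_two]
    simp only [hM, e00, e11, hφ]
    ring

/-- Nonsingularity of the Fréchet derivative of the purging-type transformation
`h(z) = σ(z)·(x* + ν(z)·(z - x*)) + (1 - σ(z))·z`: under the Euler identity
`⟨x - x*, ∇ν(x)⟩ = -ν(x)`, the bounds `0 ≤ σ(x) ≤ 1` and `0 < ν(x) < 1`, the vanishing
of `∇σ(x)` when `σ(x) = 0`, and the strict inequality `⟨x - x*, ∇σ(x)⟩ < 0` when
`σ(x) > 0`, the determinant and trace of `Dh(x)` are positive; in particular `Dh(x)` is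
an invertible linear map on the plane. -/
theorem purging_transformation_nonsingular (σ ν : EuclideanSpace ℝ (Fin 2) → ℝ)
    (xs x : EuclideanSpace ℝ (Fin 2))
    (hσ : DifferentiableAt ℝ σ x) (hν : DifferentiableAt ℝ ν x)
    (heuler : ⟪x - xs, gradient ν x⟫ = -ν x)
    (hσ0 : 0 ≤ σ x) (hσ1 : σ x ≤ 1) (hν0 : 0 < ν x) (hν1 : ν x < 1)
    (hgrad0 : σ x = 0 → gradient σ x = 0)
    (hgradneg : 0 < σ x → ⟪x - xs, gradient σ x⟫ < 0)
    (h : EuclideanSpace ℝ (Fin 2) → EuclideanSpace ℝ (Fin 2))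
    (hh : h = fun z => σ z • (xs + ν z • (z - xs)) + (1 - σ z) • z) :
    0 < LinearMap.det
        ((fderiv ℝ h x : EuclideanSpace ℝ (Fin 2) →L[ℝ] EuclideanSpace ℝ (Fin 2)) :
          EuclideanSpace ℝ (Fin 2) →ₗ[ℝ] EuclideanSpace ℝ (Fin 2)) ∧
    0 < LinearMap.trace ℝ (EuclideanSpace ℝ (Fin 2))
        ((fderiv ℝ h x : EuclideanSpace ℝ (Fin 2) →L[ℝ] EuclideanSpace ℝ (Fin 2)) :
          EuclideanSpace ℝ (Fin 2) →ₗ[ℝ] EuclideanSpace ℝ (Fin 2)) ∧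
    Function.Bijective (fderiv ℝ h x) := by
  have hdσ : ⟪x - xs, gradient σ x⟫ = fderiv ℝ σ x (x - xs) := by
    rw [real_inner_comm, gradient, InnerProductSpace.toDual_symm_apply]
  have hdν : ⟪x - xs, gradient ν x⟫ = fderiv ℝ ν x (x - xs) := by
    rw [real_inner_comm, gradient, InnerProductSpace.toDual_symm_apply]
  set φ : EuclideanSpace ℝ (Fin 2) →L[ℝ] ℝ :=
    (ν x - 1) • fderiv ℝ σ x + σ x • fderiv ℝ ν x with hφ
  have hh' : h = fun z => z + (σ z * (ν z - 1)) • (z - xs) := by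
    rw [hh]
    funext z
    module
  have hD : ∀ v, fderiv ℝ h x v = (1 + σ x * (ν x - 1)) • v + φ v • (x - xs) := by
    intro v
    have hder := (hasFDerivAt_id (𝕜 := ℝ) x).add
      ((hσ.hasFDerivAt.mul (hν.hasFDerivAt.sub_const 1)).smul
        ((hasFDerivAt_id (𝕜 := ℝ) x).sub_const xs))
    rw [hh']
    refine (DFunLike.congr_fun hder.fderiv v).trans ?_
    simp [hφ]
    module
  obtain ⟨hdet, htr⟩ := det_trace_rankOne (fderiv ℝ h x).toLinearMap _ φ (x - xs) hD
  have ha : 0 < 1 + σ x * (ν x - 1) := by nlinarith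
  have hφu : φ (x - xs) = (ν x - 1) * fderiv ℝ σ x (x - xs) - σ x * ν x := by
    have : φ (x - xs) = (ν x - 1) * fderiv ℝ σ x (x - xs) + σ x * fderiv ℝ ν x (x - xs) := by
      simp only [hφ, add_apply, smul_apply, smul_eq_mul]
    rw [this, ← hdν, heuler]
    ring
  have hb : 0 < 1 + σ x * (ν x - 1) + φ (x - xs) := by
    rw [hφu, ← hdσ]
    rcases hσ0.eq_or_lt with h0 | hpos
    · rw [hgrad0 h0.symm, ← h0]
      simp
    · nlinarith [mul_pos_of_neg_of_neg (sub_neg.mpr hν1) (hgradneg hpos)]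
  have hdet_pos : 0 < LinearMap.det (fderiv ℝ h x).toLinearMap := by
    rw [hdet]
    exact mul_pos ha hb
  refine ⟨hdet_pos, ?_, ?_⟩
  · rw [htr]
    linarith
  · exact (LinearMap.equivOfDetNeZero _ hdet_pos.ne').bijective
end

section
/- Let x₃, x*, n₃, n₄ be vectors in the Euclidean plane ℝ² with ⟨x* − x₃, n₃⟩ > 0 and ⟨x* − x₃, n₄⟩ > 0. Define γ₃(z) := ⟨z − x₃, n₃⟩, γ₄(z) := ⟨z − x₃, n₄⟩, and f(z) := γ₃(z) + γ₄(z) − √(γ₃(z)² + γ₄(z)²). Then at every point x where γ₃(x)² + γ₄(x)² ≠ 0, f is differentiable and satisfies the strict inequality ⟨x − x*, ∇f(x)⟩ < f(x). -/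
open RealInnerProductSpace

/-!
Write `r = √(γ₃² + γ₄²)`. Since `f` is positively homogeneous of degree one about `x₃`, the Euler
identity gives `⟪x - x₃, ∇f x⟫ = f x`, so the claim is equivalent to `0 < ⟪x* - x₃, ∇f x⟫`. With
`p, q > 0` the values of `γ₃, γ₄` at `x*`, this number is `p (1 - γ₃ / r) + q (1 - γ₄ / r)`; both
terms are nonnegative, and they cannot both vanish because `γ₃ = γ₄ = r` contradicts `r ≠ 0`.
-/

/-- The affine function `z ↦ ⟪z - c, n⟫` has derivative `⟪n, ·⟫` everywhere. -/
lemma hasFDerivAt_inner_sub {E : Type*} [NormedAddCommGroup E] [InnerProductSpace ℝ E]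
    (c n x : E) : HasFDerivAt (fun z : E => ⟪z - c, n⟫) (innerSL ℝ n) x := by
  have h := (innerSL ℝ n).hasFDerivAt.comp x ((hasFDerivAt_id x).sub_const c)
  refine (h.congr_fderiv (by ext; simp)).congr_of_eventuallyEq (.of_forall fun z => ?_)
  simp [real_inner_comm]

/-- With `r` the Euclidean norm of `(a, b)`, this says that the derivative of the R-conjunction at
`(a, b)` is strictly positive in every direction `(p, q)` of the open positive quadrant. -/
lemma weighted_lt_norm_mul {a b p q r : ℝ} (hp : 0 < p) (hq : 0 < q) (hr : 0 < r)
    (h : r ^ 2 = a ^ 2 + b ^ 2) : a * p + b * q < r * (p + q) := by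
  have ha : a ≤ r := by nlinarith [sq_nonneg b]
  have hb : b ≤ r := by nlinarith [sq_nonneg a]
  rcases ha.lt_or_eq with ha | rfl
  · nlinarith
  · have : b = 0 := by nlinarith
    subst this
    nlinarith

/-- Strict Euler-type inequality for the R-conjunction of two hyperplane functions
through a common point `x₃`, relative to a center `x*` lying strictly on the positive
side of both hyperplanes: with `γᵢ(z) = ⟨z - x₃, nᵢ⟩` (`i = 3, 4`) and
`f = γ₃ + γ₄ - √(γ₃² + γ₄²)`, at every point where `γ₃² + γ₄² ≠ 0` the function `f` is
differentiable and `⟨x - x*, ∇f(x)⟩ < f(x)`. -/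
theorem rconjunction_strict_euler_inequality (x₃ xs n₃ n₄ : EuclideanSpace ℝ (Fin 2))
    (h₃ : 0 < ⟪xs - x₃, n₃⟫) (h₄ : 0 < ⟪xs - x₃, n₄⟫)
    (f : EuclideanSpace ℝ (Fin 2) → ℝ)
    (hf : f = fun z => ⟪z - x₃, n₃⟫ + ⟪z - x₃, n₄⟫ -
      Real.sqrt (⟪z - x₃, n₃⟫ ^ 2 + ⟪z - x₃, n₄⟫ ^ 2))
    (x : EuclideanSpace ℝ (Fin 2))
    (hx : ⟪x - x₃, n₃⟫ ^ 2 + ⟪x - x₃, n₄⟫ ^ 2 ≠ 0) :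
    DifferentiableAt ℝ f x ∧ ⟪x - xs, gradient f x⟫ < f x := by
  subst hf
  have hd := ((hasFDerivAt_inner_sub x₃ n₃ x).add (hasFDerivAt_inner_sub x₃ n₄ x)).sub
    ((((hasFDerivAt_inner_sub x₃ n₃ x).pow 2).add
      ((hasFDerivAt_inner_sub x₃ n₄ x).pow 2)).sqrt hx)
  refine ⟨hd.differentiableAt, ?_⟩
  rw [real_inner_comm, gradient, InnerProductSpace.toDual_symm_apply]
  erw [hd.fderiv]
  have e : ∀ n, ⟪n, x - xs⟫ = ⟪x - x₃, n⟫ - ⟪xs - x₃, n⟫ := fun n => by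
    rw [← inner_sub_left, real_inner_comm, sub_sub_sub_cancel_right]
  have hpos := lt_of_le_of_ne (by positivity) hx.symm
  have hr := Real.sqrt_pos.2 hpos
  have hr2 := Real.sq_sqrt hpos.le
  have key := weighted_lt_norm_mul h₃ h₄ hr hr2
  simp [e]
  generalize ⟪x - x₃, n₃⟫ = a at *
  generalize ⟪x - x₃, n₄⟫ = b at *
  generalize ⟪xs - x₃, n₃⟫ = p at *
  generalize ⟪xs - x₃, n₄⟫ = q at *
  generalize √(a ^ 2 + b ^ 2) = r at *
  have hk : (a * p + b * q) / r < p + q := by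
    rw [div_lt_iff₀ hr]
    linarith
  -- Derivative of the root along `x - x*`: by homogeneity the direction `x - x₃` contributes `r`.
  have hE : r⁻¹ * 2⁻¹ * (2 * a * (a - p)) + r⁻¹ * 2⁻¹ * (2 * b * (b - q)) =
      r - (a * p + b * q) / r := by
    field_simp
    linarith
  linarith
end

section
/- Let C be a nonempty closed convex subset of the Euclidean plane ℝ², let y ∈ C and y_d ∈ ℝ², and let Π denote the metric projection of y_d onto C (the unique nearest point of C to y_d). Then ⟨y − y_d, y − Π⟩ ≥ ‖y − Π‖²; consequently ⟨y_d − y, y − Π⟩ ≤ −‖y − Π‖² ≤ 0, so that along the control vector field u(y) = −k(y − Π) with k > 0 the function V(y) = ‖y − y_d‖² satisfies ⟨∇V(y), u(y)⟩ ≤ −2k‖y − Π‖² ≤ 0. -/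
/-!
The obtuse-angle characterization of the nearest point (`norm_eq_iInf_iff_real_inner_le_zero`)
gives `⟪yd - proj, y - proj⟫ ≤ 0` for `y ∈ C`. Writing `y - yd = (y - proj) - (yd - proj)` turns
this into `‖y - proj‖² ≤ ⟪y - yd, y - proj⟫`. The statement about `V` follows since
`∇V(y) = 2 (y - yd)`.
-/

open RealInnerProductSpace

lemma hasGradientAt_norm_sub_sq {E : Type*} [NormedAddCommGroup E] [InnerProductSpace ℝ E]
    [CompleteSpace E] (a x : E) :
    HasGradientAt (fun z => ‖z - a‖ ^ 2) ((2 : ℝ) • (x - a)) x := by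
  rw [hasGradientAt_iff_hasFDerivAt]
  refine ((hasFDerivAt_id x).sub_const a).norm_sq.congr_fderiv ?_
  ext v
  simp

/-- Lyapunov-decrease step for the reactive controller: if `C` is a nonempty closed
convex subset of the plane, `y ∈ C`, and `proj` is the metric projection of `y_d` onto
`C` (the nearest point of `C` to `y_d`), then `⟨y - y_d, y - proj⟩ ≥ ‖y - proj‖²`, hence
`⟨y_d - y, y - proj⟩ ≤ -‖y - proj‖² ≤ 0`, and along the control vector field
`u(y) = -k(y - proj)` with `k > 0` the function `V(y) = ‖y - y_d‖²` satisfies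
`⟨∇V(y), u(y)⟩ ≤ -2k‖y - proj‖² ≤ 0`. -/
theorem projection_lyapunov_decrease (C : Set (EuclideanSpace ℝ (Fin 2)))
    (hconv : Convex ℝ C) (hclosed : IsClosed C) (hne : C.Nonempty)
    (y yd proj : EuclideanSpace ℝ (Fin 2)) (hy : y ∈ C) (hprojC : proj ∈ C)
    (hproj : ∀ z ∈ C, ‖yd - proj‖ ≤ ‖yd - z‖)
    (k : ℝ) (hk : 0 < k) :
    ‖y - proj‖ ^ 2 ≤ ⟪y - yd, y - proj⟫ ∧
    ⟪yd - y, y - proj⟫ ≤ -‖y - proj‖ ^ 2 ∧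
    ⟪yd - y, y - proj⟫ ≤ 0 ∧
    ⟪gradient (fun z => ‖z - yd‖ ^ 2) y, -(k • (y - proj))⟫ ≤ -(2 * k * ‖y - proj‖ ^ 2) ∧
    ⟪gradient (fun z => ‖z - yd‖ ^ 2) y, -(k • (y - proj))⟫ ≤ 0 := by
  have hinf : ‖yd - proj‖ = ⨅ w : C, ‖yd - w‖ := by
    have : Nonempty C := hne.to_subtype
    exact le_antisymm (le_ciInf fun w => hproj w w.2)
      (ciInf_le (f := fun w : C => ‖yd - w‖)
        ⟨0, Set.forall_mem_range.2 fun _ => norm_nonneg _⟩ ⟨proj, hprojC⟩)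
  have hobtuse : ⟪yd - proj, y - proj⟫ ≤ 0 :=
    (norm_eq_iInf_iff_real_inner_le_zero hconv hprojC).1 hinf y hy
  have hsplit : ⟪y - yd, y - proj⟫ = ‖y - proj‖ ^ 2 - ⟪yd - proj, y - proj⟫ := by
    rw [← real_inner_self_eq_norm_sq, ← inner_sub_left, sub_sub_sub_cancel_right]
  have hneg : ⟪yd - y, y - proj⟫ = -⟪y - yd, y - proj⟫ := by
    rw [← inner_neg_left, neg_sub]
  have hmain : ‖y - proj‖ ^ 2 ≤ ⟪y - yd, y - proj⟫ := by linarith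
  have hsq : 0 ≤ ‖y - proj‖ ^ 2 := sq_nonneg _
  have hgrad : ⟪gradient (fun z => ‖z - yd‖ ^ 2) y, -(k • (y - proj))⟫
      = -(2 * k * ⟪y - yd, y - proj⟫) := by
    rw [(hasGradientAt_norm_sub_sq yd y).gradient, inner_neg_right, real_inner_smul_left,
      real_inner_smul_right, mul_assoc]
  have hdecr : 2 * k * ‖y - proj‖ ^ 2 ≤ 2 * k * ⟪y - yd, y - proj⟫ := by gcongr
  have hdecr_nonneg : 0 ≤ 2 * k * ‖y - proj‖ ^ 2 := by positivity
  refine ⟨hmain, ?_, ?_, ?_, ?_⟩ <;> linarith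
end

section
/- Let v_max, ω_max, E, p, k_{v,nom}, k_{ω,nom} be positive reals, let λ ∈ (0, 1), and let v̂, ω̂, ϑ be nonzero reals. Define k_v := min( k_{v,nom}, E·v_max/|v̂|, λ·p·E·ω_max/(|v̂|·|ϑ|) ), k_ω := min( k_{ω,nom}, (1 − λ)·p·ω_max/|ω̂| ), v := k_v·v̂/E, and ω := p⁻¹·( k_ω·ω̂ − v·ϑ ). Then k_v > 0, k_ω > 0, |v| ≤ v_max, and |ω| ≤ ω_max. -/
/-!
Each bound in the two minima caps one term of the inputs: the second entry of `kv` gives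
`|v| ≤ vmax`, the third gives `|v * ϑ| ≤ lam * p * ωmax`, and the second entry of `kω` gives
`|kω * ωhat| ≤ (1 - lam) * p * ωmax`. The triangle inequality adds the last two to `p * ωmax`,
which bounds `p * |ω|`.
-/

/-- The adaptive gain selection for the bounded-input differential drive controller:
with `k_v = min(k_{v,nom}, E·v_max/|v̂|, λ·p·E·ω_max/(|v̂|·|ϑ|))` and
`k_ω = min(k_{ω,nom}, (1 - λ)·p·ω_max/|ω̂|)`, the gains are positive and the pulled-back
physical inputs `v = k_v·v̂/E` and `ω = p⁻¹·(k_ω·ω̂ - v·ϑ)` respect the command limits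
`|v| ≤ v_max` and `|ω| ≤ ω_max`. -/
theorem bounded_inputs_diffdrive (vmax ωmax E p kvnom kωnom : ℝ)
    (hvmax : 0 < vmax) (hωmax : 0 < ωmax) (hE : 0 < E) (hp : 0 < p)
    (hkvnom : 0 < kvnom) (hkωnom : 0 < kωnom)
    (lam : ℝ) (hlam : lam ∈ Set.Ioo (0 : ℝ) 1)
    (vhat ωhat ϑ : ℝ) (hvhat : vhat ≠ 0) (hωhat : ωhat ≠ 0) (hϑ : ϑ ≠ 0)
    (kv kω v ω : ℝ)
    (hkv : kv = min kvnom (min (E * vmax / |vhat|) (lam * p * E * ωmax / (|vhat| * |ϑ|))))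
    (hkω : kω = min kωnom ((1 - lam) * p * ωmax / |ωhat|))
    (hv : v = kv * vhat / E)
    (hω : ω = p⁻¹ * (kω * ωhat - v * ϑ)) :
    0 < kv ∧ 0 < kω ∧ |v| ≤ vmax ∧ |ω| ≤ ωmax := by
  obtain ⟨hl0, hl1⟩ := hlam
  have hl1' : 0 < 1 - lam := sub_pos.mpr hl1
  have hav : 0 < |vhat| := abs_pos.mpr hvhat
  have haω : 0 < |ωhat| := abs_pos.mpr hωhat
  have haϑ : 0 < |ϑ| := abs_pos.mpr hϑ
  have kv_pos : 0 < kv := by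
    rw [hkv]
    exact lt_min hkvnom (lt_min (by positivity) (by positivity))
  have kω_pos : 0 < kω := by
    rw [hkω]
    exact lt_min hkωnom (by positivity)
  have h1 : kv * |vhat| ≤ E * vmax := by
    rw [← le_div_iff₀ hav, hkv]
    exact (min_le_right _ _).trans (min_le_left _ _)
  have h2 : kv * (|vhat| * |ϑ|) ≤ lam * p * E * ωmax := by
    rw [← le_div_iff₀ (mul_pos hav haϑ), hkv]
    exact (min_le_right _ _).trans (min_le_right _ _)
  have h3 : kω * |ωhat| ≤ (1 - lam) * p * ωmax := by
    rw [← le_div_iff₀ haω, hkω]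
    exact min_le_right _ _
  have v_abs : |v| = kv * |vhat| / E := by
    rw [hv, abs_div, abs_mul, abs_of_pos kv_pos, abs_of_pos hE]
  refine ⟨kv_pos, kω_pos, ?_, ?_⟩
  · rw [v_abs, div_le_iff₀ hE]
    linarith
  · -- The budget `p * ωmax` is split: `1 - lam` of it for `kω * ωhat`, `lam` for `v * ϑ`.
    have h4 : |v * ϑ| ≤ lam * p * ωmax := by
      rw [abs_mul, v_abs, div_mul_eq_mul_div, div_le_iff₀ hE]
      linarith
    have h5 : |kω * ωhat| ≤ (1 - lam) * p * ωmax := by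
      rwa [abs_mul, abs_of_pos kω_pos]
    rw [hω, abs_mul, abs_inv, abs_of_pos hp, inv_mul_le_iff₀ hp]
    calc |kω * ωhat - v * ϑ| ≤ |kω * ωhat| + |v * ϑ| := abs_sub _ _
      _ ≤ (1 - lam) * p * ωmax + lam * p * ωmax := add_le_add h5 h4
      _ = p * ωmax := by ring
end
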